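/- arXiv:1803.05860 — 3 statements merged into one kernel-verified Lean document; each statement's English description precedes it below -/
import Mathlib

section
/- Let G be a connected weighted graph on a finite vertex set V with positive edge susceptances and weighted Laplacian L. Partition V into a nonempty set T of terminal vertices and a set I of interior vertices, and write L in block form with blocks L_TT, L_TI, L_IT, L_II. Then L_II is invertible, and the Schur complement L_red = L_TT − L_TI · L_II^{-1} · L_IT (the Kron reduction eliminating all interior vertices) is itself the weighted Laplacian of a graph on T with nonnegative edge weights: L_red is symmetric, every row of L_red sums to zero, and every off-diagonal entry of L_red is nonpositive. -/
/-!
The proof rests on a minimum principle: if `A` has nonpositive off-diagonal entries and nonnegative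
row sums, then at a vertex `a` where `x` has a nonpositive minimum every term of
`(A *ᵥ x) a = (∑ u, A a u) * x a + ∑ u, A a u * (x u - x a)` is nonpositive, so `0 ≤ (A *ᵥ x) a`
forces `x` to take its minimal value at all neighbours of `a`. A negative minimum would thus spread
along paths to a terminal; hence `x` is nonnegative as soon as it is nonnegative on the terminals
and `A *ᵥ x` is nonnegative off them. For `x` vanishing on the terminals this says that the interior
block is invertible with entrywise nonnegative inverse, which makes the off-diagonal entries of the
Schur complement nonpositive. Its row sums vanish because the Schur complement acts on the terminal
values of a harmonic vector, here the constant `1`, as the whole matrix does.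
-/

open Matrix

/-- The weighted Laplacian of a graph on the finite vertex set `V` whose edges are
the pairs `{u,v}` with `w u v > 0`, carrying susceptance `w u v`. -/
def weightedLaplacian {V : Type*} [Fintype V] [DecidableEq V] (w : V → V → ℝ) :
    Matrix V V ℝ :=
  Matrix.of fun u v => if u = v then ∑ x, w u x else -(w u v)

section Monotone

variable {n K : Type*} [Fintype n]

/-- A matrix is monotone in the sense of Collatz if only nonnegative vectors have a nonnegative
image; for an invertible matrix this says that the inverse is entrywise nonnegative. -/
def IsMonotoneMatrix [NonUnitalNonAssocSemiring K] [LE K] (A : Matrix n n K) : Prop :=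
  ∀ x : n → K, 0 ≤ A *ᵥ x → 0 ≤ x

namespace IsMonotoneMatrix

lemma mulVec_injective [Ring K] [PartialOrder K] [IsOrderedAddMonoid K] {A : Matrix n n K}
    (hA : IsMonotoneMatrix A) : Function.Injective A.mulVec := by
  have le_of_mulVec_eq {x y : n → K} (hxy : A *ᵥ x = A *ᵥ y) : x ≤ y :=
    sub_nonneg.1 (hA _ (by rw [mulVec_sub, hxy, sub_self]))
  exact fun x y hxy => le_antisymm (le_of_mulVec_eq hxy) (le_of_mulVec_eq hxy.symm)

lemma isUnit_det [DecidableEq n] [Field K] [PartialOrder K] [IsOrderedAddMonoid K]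
    {A : Matrix n n K} (hA : IsMonotoneMatrix A) : IsUnit A.det :=
  (isUnit_iff_isUnit_det A).1 (mulVec_injective_iff_isUnit.1 hA.mulVec_injective)

lemma inv_apply_nonneg [DecidableEq n] [Field K] [PartialOrder K] [IsOrderedRing K]
    {A : Matrix n n K} (hA : IsMonotoneMatrix A) (i j : n) : 0 ≤ A⁻¹ i j := by
  have hcol : 0 ≤ A⁻¹ *ᵥ Pi.single j 1 := by
    refine hA _ ?_
    rw [mulVec_mulVec, mul_nonsing_inv _ hA.isUnit_det, one_mulVec]
    exact Pi.single_nonneg.2 zero_le_one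
  simpa using hcol i

end IsMonotoneMatrix

end Monotone

/-- A Z-matrix: its off-diagonal entries are nonpositive. -/
def IsZMatrix {n K : Type*} [Zero K] [LE K] (A : Matrix n n K) : Prop :=
  ∀ ⦃i j⦄, i ≠ j → A i j ≤ 0

section Blocks

variable {m n K : Type*} [Fintype n] [DecidableEq n] [NonUnitalNonAssocSemiring K]

lemma toBlock_mulVec_add_toBlock_compl_mulVec (A : Matrix m n K) (p : m → Prop) (T : Finset n)
    (x : n → K) :
    A.toBlock p (· ∈ T) *ᵥ (x ∘ (↑)) + A.toBlock p (· ∈ Tᶜ) *ᵥ (x ∘ (↑)) = (A *ᵥ x) ∘ (↑) := by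
  ext i
  exact (congrArg₂ (· + ·) (Finset.sum_coe_sort T fun j => A i j * x j)
    (Finset.sum_coe_sort Tᶜ fun j => A i j * x j)).trans (Finset.sum_add_sum_compl T _)

end Blocks

section MinimumPrinciple

variable {V K : Type*} [Fintype V] [CommRing K]

lemma mulVec_apply_eq_rowSum_mul_add (A : Matrix V V K) (x : V → K) (a : V) :
    (A *ᵥ x) a = (A *ᵥ 1) a * x a + ∑ u, A a u * (x u - x a) := by
  simp [mulVec, dotProduct, mul_sub, Finset.sum_mul]

variable [LinearOrder K] [IsStrictOrderedRing K] {A : Matrix V V K}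

lemma IsZMatrix.eq_of_forall_le_of_mulVec_nonneg (hA : IsZMatrix A) (hrow : 0 ≤ A *ᵥ 1)
    {x : V → K} {a b : V} (hmin : ∀ u, x a ≤ x u) (ha : x a ≤ 0) (hx : 0 ≤ (A *ᵥ x) a)
    (hab : A a b ≠ 0) : x b = x a := by
  have hterm : ∀ u ∈ Finset.univ, A a u * (x u - x a) ≤ 0 := by
    intro u _
    rcases eq_or_ne a u with rfl | hau
    · simp
    · exact mul_nonpos_of_nonpos_of_nonneg (hA hau) (sub_nonneg.2 (hmin u))
  have hsum : ∑ u, A a u * (x u - x a) = 0 := by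
    refine le_antisymm (Finset.sum_nonpos hterm) (hx.trans ?_)
    rw [mulVec_apply_eq_rowSum_mul_add]
    exact add_le_of_nonpos_left (mul_nonpos_of_nonneg_of_nonpos (hrow a) ha)
  have hb := (Finset.sum_eq_zero_iff_of_nonpos hterm).1 hsum b (Finset.mem_univ b)
  exact sub_eq_zero.1 ((mul_eq_zero.1 hb).resolve_left hab)

theorem IsZMatrix.nonneg_of_mulVec_nonneg_off (hA : IsZMatrix A) (hrow : 0 ≤ A *ᵥ 1) {S : Set V}
    (hS : ∀ v, ∃ s ∈ S, Relation.ReflTransGen (fun a b => A a b ≠ 0) v s) {x : V → K}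
    (hxS : ∀ v ∈ S, 0 ≤ x v) (hx : ∀ v ∉ S, 0 ≤ (A *ᵥ x) v) : 0 ≤ x := by
  intro v
  have : Nonempty V := ⟨v⟩
  obtain ⟨m, hmin⟩ := Finite.exists_min x
  refine le_trans ?_ (hmin v)
  by_contra! hm
  have heq {u : V} (hmu : Relation.ReflTransGen (fun a b => A a b ≠ 0) m u) : x u = x m := by
    induction hmu with
    | refl => rfl
    | @tail a b _ hab ha =>
      have haS : a ∉ S := fun h => (hxS a h).not_gt (ha ▸ hm)
      exact (hA.eq_of_forall_le_of_mulVec_nonneg hrow (ha ▸ hmin) (ha ▸ hm.le) (hx a haS)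
        hab).trans ha
  obtain ⟨s, hs, hms⟩ := hS m
  exact (hxS s hs).not_gt (heq hms ▸ hm)

theorem IsZMatrix.isMonotoneMatrix_toBlock_compl [DecidableEq V] (hA : IsZMatrix A)
    (hrow : 0 ≤ A *ᵥ 1) {T : Finset V}
    (hT : ∀ v, ∃ t ∈ T, Relation.ReflTransGen (fun a b => A a b ≠ 0) v t) :
    IsMonotoneMatrix (A.toBlock (· ∈ Tᶜ) (· ∈ Tᶜ)) := by
  intro y hy
  let x : V → K := fun v => if h : v ∈ Tᶜ then y ⟨v, h⟩ else 0
  have hxT : x ∘ ((↑) : {v // v ∈ T} → V) = 0 := by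
    ext v
    simp [x]
  have hxI : x ∘ ((↑) : {v // v ∈ Tᶜ} → V) = y := by
    ext v
    exact dif_pos v.2
  have hAx : A.toBlock (· ∈ Tᶜ) (· ∈ Tᶜ) *ᵥ y = (A *ᵥ x) ∘ (↑) := by
    rw [← toBlock_mulVec_add_toBlock_compl_mulVec, hxT, hxI, mulVec_zero, zero_add]
  have hx : 0 ≤ x := hA.nonneg_of_mulVec_nonneg_off hrow hT
    (fun v hv => (congrFun hxT ⟨v, hv⟩).ge)
    (fun v hv => (hy ⟨v, Finset.mem_compl.2 hv⟩).trans_eq (congrFun hAx _))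
  exact fun i => (hx i).trans_eq (congrFun hxI i)

end MinimumPrinciple

section SchurComplement

variable {m n K : Type*} [Fintype n] [DecidableEq n] [CommRing K]

/-- The Schur complement of the block `D` in the block matrix with rows `A, B` and `C, D`;
meaningful only for invertible `D`, since otherwise `D⁻¹ = 0`. -/
noncomputable def schurComplement (A : Matrix m m K) (B : Matrix m n K) (C : Matrix n m K)
    (D : Matrix n n K) : Matrix m m K :=
  A - B * D⁻¹ * C

variable {A : Matrix m m K} {B : Matrix m n K} {C : Matrix n m K} {D : Matrix n n K}

variable (A B C D) in
lemma transpose_schurComplement : (schurComplement A B C D)ᵀ = schurComplement Aᵀ Cᵀ Bᵀ Dᵀ := by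
  simp only [schurComplement, transpose_sub, transpose_mul, transpose_nonsing_inv, Matrix.mul_assoc]

lemma schurComplement_mulVec [Fintype m] (hD : IsUnit D.det) {x : m → K} {y : n → K}
    (hxy : C *ᵥ x + D *ᵥ y = 0) : schurComplement A B C D *ᵥ x = A *ᵥ x + B *ᵥ y := by
  rw [schurComplement, sub_mulVec, ← mulVec_mulVec, eq_neg_of_add_eq_zero_left hxy, mulVec_neg,
    mulVec_mulVec, nonsing_inv_mul_cancel_right _ _ hD, sub_neg_eq_add]

lemma IsZMatrix.schurComplement [PartialOrder K] [IsOrderedRing K] (hA : IsZMatrix A)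
    (hB : ∀ i j, B i j ≤ 0) (hC : ∀ i j, C i j ≤ 0) (hD : ∀ i j, 0 ≤ D⁻¹ i j) :
    IsZMatrix (schurComplement A B C D) := by
  have hBD (i : m) (j : n) : (B * D⁻¹) i j ≤ 0 :=
    Finset.sum_nonpos fun k _ => mul_nonpos_of_nonpos_of_nonneg (hB i k) (hD k j)
  have hBDC (i j : m) : 0 ≤ (B * D⁻¹ * C) i j :=
    Finset.sum_nonneg fun k _ => mul_nonneg_of_nonpos_of_nonpos (hBD i k) (hC k j)
  exact fun i j hij => (sub_le_self _ (hBDC i j)).trans (hA hij)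

end SchurComplement

section Laplacian

variable {V K : Type*} [Fintype V]

/-- A weighted Laplacian, characterised by its entries: `L` is the Laplacian of the graph with
edge weights `-L u v ≥ 0` for `u ≠ v`. Symmetry is not required, so the graph may
be directed. -/
structure IsLaplacian [NonAssocSemiring K] [LE K] (L : Matrix V V K) : Prop where
  isZMatrix : IsZMatrix L
  mulVec_one : L *ᵥ 1 = 0

lemma IsLaplacian.sum_row_eq_zero [NonAssocSemiring K] [LE K] {L : Matrix V V K}
    (hL : IsLaplacian L) (u : V) : ∑ v, L u v = 0 := by
  simpa [mulVec, dotProduct] using congrFun hL.mulVec_one u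

end Laplacian

section KronReduction

variable {V K : Type*} [Fintype V] [DecidableEq V]

/-- The Kron reduction of `L` onto the terminals `T`: the Schur complement of the interior block,
indexed by `Tᶜ`. -/
noncomputable def kronReduction [CommRing K] (L : Matrix V V K) (T : Finset V) :
    Matrix {v // v ∈ T} {v // v ∈ T} K :=
  schurComplement (L.toBlock (· ∈ T) (· ∈ T)) (L.toBlock (· ∈ T) (· ∈ Tᶜ))
    (L.toBlock (· ∈ Tᶜ) (· ∈ T)) (L.toBlock (· ∈ Tᶜ) (· ∈ Tᶜ))

lemma transpose_kronReduction [CommRing K] (L : Matrix V V K) (T : Finset V) :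
    (kronReduction L T)ᵀ = kronReduction Lᵀ T :=
  transpose_schurComplement _ _ _ _

lemma kronReduction_mulVec [CommRing K] {L : Matrix V V K} {T : Finset V}
    (hdet : IsUnit (L.toBlock (· ∈ Tᶜ) (· ∈ Tᶜ)).det) {x : V → K}
    (hx : ∀ v ∉ T, (L *ᵥ x) v = 0) :
    kronReduction L T *ᵥ (x ∘ (↑)) = (L *ᵥ x) ∘ (↑) := by
  rw [kronReduction, schurComplement_mulVec (y := x ∘ (↑)) hdet,
    toBlock_mulVec_add_toBlock_compl_mulVec]
  rw [toBlock_mulVec_add_toBlock_compl_mulVec]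
  exact funext fun v => hx v (Finset.mem_compl.1 v.2)

lemma IsZMatrix.kronReduction [CommRing K] [PartialOrder K] [IsOrderedRing K]
    {L : Matrix V V K} (hL : IsZMatrix L) {T : Finset V}
    (hinv : ∀ i j, 0 ≤ (L.toBlock (· ∈ Tᶜ) (· ∈ Tᶜ))⁻¹ i j) : IsZMatrix (kronReduction L T) := by
  have hne (t : {v // v ∈ T}) (i : {v // v ∈ Tᶜ}) : (t : V) ≠ i :=
    fun h => Finset.mem_compl.1 i.2 (h ▸ t.2)
  exact IsZMatrix.schurComplement (fun _ _ hst => hL (Subtype.coe_injective.ne hst))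
    (fun t i => hL (hne t i)) (fun i t => hL (hne t i).symm) hinv

theorem kron_reduction_is_laplacian_general [Field K] [LinearOrder K] [IsStrictOrderedRing K]
    {L : Matrix V V K} (hL : IsLaplacian L) {T : Finset V}
    (hT : ∀ v, ∃ t ∈ T, Relation.ReflTransGen (fun a b => L a b ≠ 0) v t) :
    IsUnit (L.toBlock (· ∈ Tᶜ) (· ∈ Tᶜ)).det ∧ IsLaplacian (kronReduction L T) ∧
      (L.IsSymm → (kronReduction L T).IsSymm) := by
  have hmono := hL.isZMatrix.isMonotoneMatrix_toBlock_compl hL.mulVec_one.ge hT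
  refine ⟨hmono.isUnit_det, ⟨hL.isZMatrix.kronReduction hmono.inv_apply_nonneg, ?_⟩,
    fun hsymm => ?_⟩
  · have hone := kronReduction_mulVec hmono.isUnit_det fun v _ => congrFun hL.mulVec_one v
    rwa [hL.mulVec_one] at hone
  · rw [IsSymm, transpose_kronReduction, hsymm.eq]

end KronReduction

section WeightedLaplacian

variable {V : Type*} [Fintype V] [DecidableEq V] {w : V → V → ℝ}

lemma weightedLaplacian_isSymm (hsym : ∀ u v, w u v = w v u) : (weightedLaplacian w).IsSymm := by
  ext u v
  rcases eq_or_ne u v with rfl | huv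
  · rfl
  · simp [weightedLaplacian, huv, huv.symm, hsym u v]

lemma weightedLaplacian_eq_diagonal_sub (hdiag : ∀ v, w v v = 0) :
    weightedLaplacian w = diagonal (of w *ᵥ 1) - of w := by
  ext u v
  rcases eq_or_ne u v with rfl | huv
  · simp [weightedLaplacian, hdiag, mulVec, dotProduct]
  · simp [weightedLaplacian, huv]

lemma weightedLaplacian_isLaplacian (hdiag : ∀ v, w v v = 0) (hnonneg : ∀ u v, 0 ≤ w u v) :
    IsLaplacian (weightedLaplacian w) where
  isZMatrix u v huv := by simp [weightedLaplacian, huv, hnonneg u v]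
  mulVec_one := by
    ext u
    simp [weightedLaplacian_eq_diagonal_sub hdiag, sub_mulVec, mulVec_diagonal]

lemma weightedLaplacian_apply_ne_zero_of_adj (hsym : ∀ u v, w u v = w v u) {a b : V}
    (hab : (SimpleGraph.fromRel fun u v => 0 < w u v).Adj a b) : weightedLaplacian w a b ≠ 0 := by
  obtain ⟨hne, hpos⟩ := (SimpleGraph.fromRel_adj _ a b).1 hab
  rw [hsym b a, or_self] at hpos
  simp [weightedLaplacian, hne, hpos.ne']

lemma reflTransGen_weightedLaplacian_ne_zero (hsym : ∀ u v, w u v = w v u)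
    (hconn : (SimpleGraph.fromRel fun u v => 0 < w u v).Preconnected) (u v : V) :
    Relation.ReflTransGen (fun a b => weightedLaplacian w a b ≠ 0) u v :=
  Relation.ReflTransGen.mono (fun _ _ => weightedLaplacian_apply_ne_zero_of_adj hsym) _ _
    ((SimpleGraph.reachable_iff_reflTransGen u v).1 (hconn u v))

end WeightedLaplacian

/-- Kron reduction: for a connected weighted graph with positive edge susceptances,
partition the vertices into a nonempty set `T` of terminals and the set `Tᶜ` of
interior vertices.  Then the interior block `L_II` is invertible, and the Schur
complement `L_red = L_TT − L_TI ⬝ L_II⁻¹ ⬝ L_IT` is symmetric, has zero row sums,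
and has nonpositive off-diagonal entries — i.e. it is the weighted Laplacian of a
graph on `T` with nonnegative edge weights. -/
theorem kron_reduction_is_laplacian {V : Type*} [Fintype V] [DecidableEq V]
    (w : V → V → ℝ)
    (hsym : ∀ u v, w u v = w v u)
    (hdiag : ∀ v, w v v = 0)
    (hnonneg : ∀ u v, 0 ≤ w u v)
    (hconn : (SimpleGraph.fromRel fun u v => 0 < w u v).Connected)
    (T : Finset V) (hT : T.Nonempty)
    (LTT : Matrix {v : V // v ∈ T} {v : V // v ∈ T} ℝ)
    (LTI : Matrix {v : V // v ∈ T} {v : V // v ∈ Tᶜ} ℝ)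
    (LIT : Matrix {v : V // v ∈ Tᶜ} {v : V // v ∈ T} ℝ)
    (LII : Matrix {v : V // v ∈ Tᶜ} {v : V // v ∈ Tᶜ} ℝ)
    (hLTT : LTT = (weightedLaplacian w).submatrix
      (fun x : {v : V // v ∈ T} => (x : V)) (fun x : {v : V // v ∈ T} => (x : V)))
    (hLTI : LTI = (weightedLaplacian w).submatrix
      (fun x : {v : V // v ∈ T} => (x : V)) (fun x : {v : V // v ∈ Tᶜ} => (x : V)))
    (hLIT : LIT = (weightedLaplacian w).submatrix
      (fun x : {v : V // v ∈ Tᶜ} => (x : V)) (fun x : {v : V // v ∈ T} => (x : V)))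
    (hLII : LII = (weightedLaplacian w).submatrix
      (fun x : {v : V // v ∈ Tᶜ} => (x : V)) (fun x : {v : V // v ∈ Tᶜ} => (x : V))) :
    IsUnit LII.det ∧
    (LTT - LTI * LII⁻¹ * LIT).IsSymm ∧
    (∀ u, ∑ v, (LTT - LTI * LII⁻¹ * LIT) u v = 0) ∧
    (∀ u v, u ≠ v → (LTT - LTI * LII⁻¹ * LIT) u v ≤ 0) := by
  obtain ⟨t, ht⟩ := hT
  obtain ⟨hdet, hred, hsymm⟩ := kron_reduction_is_laplacian_general
    (weightedLaplacian_isLaplacian hdiag hnonneg)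
    fun v => ⟨t, ht, reflTransGen_weightedLaplacian_ne_zero hsym hconn.preconnected v t⟩
  subst hLTT hLTI hLIT hLII
  exact ⟨hdet, hsymm (weightedLaplacian_isSymm hsym),
    hred.sum_row_eq_zero, hred.isZMatrix⟩
end

section
/- Let G be a connected weighted graph on a finite vertex set V with positive edge susceptances and weighted Laplacian L. Let C ⊆ V be a vertex cut set, let B be a nonempty union of the vertex sets of some (but not all) connected components of G − C, and let A = V ∖ (B ∪ C), so that no edge of G joins A and B. Suppose θ : V → ℝ satisfies: (L θ)_v = 0 for every v ∈ A (zero net power injection at every interior bus of the i-th sub-graph), and θ is constant on C (equal voltage angles at all cut-set buses). Then θ is constant on A ∪ C; in particular, the power flow b_e (θ_u − θ_v) on every edge e = {u,v} with both endpoints in A ∪ C is zero. -/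
open Matrix

/-!
If the net outflow of a vertex `v` vanishes and no neighbour of `v` has a larger angle, then every
neighbour of `v` has the same angle as `v`. Suppose that the maximum of `θ` on `A` exceeds the
values on the cut `C`. It is then the maximum on `A ∪ C`, which contains all neighbours of `A`, so
the vertices of `A` attaining it are closed under passing to neighbours, although some path leads
out of `A`. This contradiction bounds `θ` on `A` above by its value on `C`, and the same argument
for `-θ` bounds it below.
-/

section NetOutflow

variable {V K : Type*} [Ring K] {w : V → V → K} {θ : V → K} {A C : Set V} {κ : K} {v : V}

/-- The net power leaving the vertex `v` in the DC power flow with susceptances `w` and angles `θ`.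
It is a `finsum`, so that locally finite networks on an infinite vertex set are covered; it takes
the junk value `0` when infinitely many of the flows out of `v` are nonzero. -/
noncomputable def netOutflow (w : V → V → K) (θ : V → K) (v : V) : K :=
  ∑ᶠ x, w v x * (θ v - θ x)

theorem netOutflow_neg (w : V → V → K) (θ : V → K) (v : V) :
    netOutflow w (-θ) v = -netOutflow w θ v := by
  rw [netOutflow, netOutflow, ← finsum_neg_distrib]
  refine finsum_congr fun x => ?_
  rw [Pi.neg_apply, Pi.neg_apply, ← mul_neg, neg_sub_neg, neg_sub]

variable [LinearOrder K] [IsStrictOrderedRing K]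

theorem eq_of_netOutflow_eq_zero_of_forall_le
    (hnonneg : ∀ x, 0 ≤ w v x) (hfin : (w v).support.Finite) (hv : netOutflow w θ v = 0)
    (hle : ∀ x, 0 < w v x → θ x ≤ θ v) {x : V} (hx : 0 < w v x) : θ x = θ v := by
  have flow_nonneg (y : V) : 0 ≤ w v y * (θ v - θ y) := by
    rcases (hnonneg y).eq_or_lt with hy | hy
    · rw [← hy, zero_mul]
    · exact mul_nonneg hy.le (sub_nonneg.mpr (hle y hy))
  have flow_finite : (fun y => w v y * (θ v - θ y)).support.Finite :=
    hfin.subset (Function.support_mul_subset_left _ _)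
  by_contra hne
  have flow_pos : 0 < w v x * (θ v - θ x) :=
    mul_pos hx (sub_pos.mpr ((hle x hx).lt_of_ne hne))
  exact (finsum_pos flow_nonneg ⟨x, flow_pos⟩ flow_finite).ne' hv

theorem le_of_netOutflow_eq_zero_of_boundary_le (hA : A.Finite)
    (hnonneg : ∀ a ∈ A, ∀ x, 0 ≤ w a x) (hfin : ∀ a ∈ A, (w a).support.Finite)
    (hnbr : ∀ a ∈ A, ∀ x, 0 < w a x → x ∈ A ∪ C)
    (hexit : ∀ a ∈ A, ∃ b ∉ A, Relation.ReflTransGen (fun x y => 0 < w x y) a b)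
    (hharm : ∀ a ∈ A, netOutflow w θ a = 0) (hC : ∀ c ∈ C, θ c ≤ κ) :
    ∀ a ∈ A, θ a ≤ κ := by
  by_contra! ⟨a, ha, hκa⟩
  obtain ⟨m, hm, hmax⟩ := A.exists_max_image θ hA ⟨a, ha⟩
  have lt_max : κ < θ m := hκa.trans_le (hmax a ha)
  have le_max : ∀ x ∈ A ∪ C, θ x ≤ θ m := by
    rintro x (hx | hx)
    exacts [hmax x hx, (hC x hx).trans lt_max.le]
  have max_step {u v : V} (hu : u ∈ A ∧ θ u = θ m) (huv : 0 < w u v) : v ∈ A ∧ θ v = θ m := by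
    obtain ⟨huA, hum⟩ := hu
    have hvm : θ v = θ m := hum ▸ eq_of_netOutflow_eq_zero_of_forall_le (hnonneg u huA)
      (hfin u huA) (hharm u huA) (fun x hx => hum ▸ le_max x (hnbr u huA x hx)) huv
    exact ⟨(hnbr u huA v huv).resolve_right fun hvC => (hC v hvC).not_gt (hvm ▸ lt_max), hvm⟩
  have max_path {v : V} (hmv : Relation.ReflTransGen (fun x y => 0 < w x y) m v) :
      v ∈ A ∧ θ v = θ m := by
    induction hmv with
    | refl => exact ⟨hm, rfl⟩
    | tail _ huv ih => exact max_step ih huv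
  obtain ⟨b, hbA, hmb⟩ := hexit m hm
  exact hbA (max_path hmb).1

theorem eq_of_netOutflow_eq_zero_of_boundary_eq (hA : A.Finite)
    (hnonneg : ∀ a ∈ A, ∀ x, 0 ≤ w a x) (hfin : ∀ a ∈ A, (w a).support.Finite)
    (hnbr : ∀ a ∈ A, ∀ x, 0 < w a x → x ∈ A ∪ C)
    (hexit : ∀ a ∈ A, ∃ b ∉ A, Relation.ReflTransGen (fun x y => 0 < w x y) a b)
    (hharm : ∀ a ∈ A, netOutflow w θ a = 0) (hC : ∀ c ∈ C, θ c = κ) :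
    ∀ v ∈ A ∪ C, θ v = κ := by
  rintro v (hv | hv)
  · have hharm_neg : ∀ a ∈ A, netOutflow w (-θ) a = 0 := fun a ha => by
      rw [netOutflow_neg, hharm a ha, neg_zero]
    refine le_antisymm ?_ (neg_le_neg_iff.mp ?_)
    · exact le_of_netOutflow_eq_zero_of_boundary_le hA hnonneg hfin hnbr hexit hharm
        (fun c hc => (hC c hc).le) v hv
    · exact le_of_netOutflow_eq_zero_of_boundary_le hA hnonneg hfin hnbr hexit hharm_neg
        (fun c hc => neg_le_neg (hC c hc).ge) v hv
  · exact hC v hv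

theorem zero_flow_in_subgrid_general {B : Set V} (hcover : Aᶜ ⊆ C ∪ B) (hA : A.Finite)
    (hnonneg : ∀ a ∈ A, ∀ x, 0 ≤ w a x) (hfin : ∀ a ∈ A, (w a).support.Finite)
    (hexit : ∀ a ∈ A, ∃ b ∉ A, Relation.ReflTransGen (fun x y => 0 < w x y) a b)
    (hsep : ∀ a ∈ A, ∀ b ∈ B, w a b = 0)
    (hharm : ∀ a ∈ A, netOutflow w θ a = 0)
    (hconst : ∀ u ∈ C, ∀ v ∈ C, θ u = θ v) :
    (∀ u ∈ A ∪ C, ∀ v ∈ A ∪ C, θ u = θ v) ∧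
    (∀ u ∈ A ∪ C, ∀ v ∈ A ∪ C, 0 < w u v → w u v * (θ u - θ v) = 0) := by
  have hnbr : ∀ a ∈ A, ∀ x, 0 < w a x → x ∈ A ∪ C := fun a ha x hx =>
    or_iff_not_imp_left.mpr fun hxA =>
      (hcover hxA).resolve_right fun hxB => hx.ne' (hsep a ha x hxB)
  have angle_eq : ∀ u ∈ A ∪ C, ∀ v ∈ A ∪ C, θ u = θ v := by
    intro u hu v hv
    obtain ⟨κ, hκ⟩ : ∃ κ, ∀ c ∈ C, θ c = κ := by
      rcases C.eq_empty_or_nonempty with rfl | ⟨c, hc⟩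
      exacts [⟨0, fun _ h => h.elim⟩, ⟨θ c, fun x hx => hconst x hx c hc⟩]
    have eq_κ := eq_of_netOutflow_eq_zero_of_boundary_eq hA hnonneg hfin hnbr hexit hharm hκ
    exact (eq_κ u hu).trans (eq_κ v hv).symm
  exact ⟨angle_eq, fun u hu v hv _ => by rw [angle_eq u hu v hv, sub_self, mul_zero]⟩

end NetOutflow

theorem reflTransGen_of_connected_fromRel {V : Type*} {r : V → V → Prop}
    (hsymm : ∀ u v, r u v → r v u) (hconn : (SimpleGraph.fromRel r).Connected) (u v : V) :
    Relation.ReflTransGen r u v :=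
  Relation.ReflTransGen.mono
    (fun x y hxy => ((SimpleGraph.fromRel_adj r x y).mp hxy).2.elim id (hsymm y x)) u v
    ((SimpleGraph.reachable_iff_reflTransGen u v).mp (hconn u v))

theorem weightedLaplacian_mulVec_apply {V : Type*} [Fintype V] [DecidableEq V]
    {w : V → V → ℝ} {v : V} (hdiag : w v v = 0) (θ : V → ℝ) :
    (weightedLaplacian w *ᵥ θ) v = netOutflow w θ v := by
  have entry_mul (x : V) : weightedLaplacian w v x * θ x =
      (if v = x then (∑ y, w v y) * θ v else 0) - w v x * θ x := by
    obtain rfl | hx := eq_or_ne v x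
    · simp [weightedLaplacian, hdiag]
    · simp [weightedLaplacian, hx]
  calc (weightedLaplacian w *ᵥ θ) v
      = ∑ x, ((if v = x then (∑ y, w v y) * θ v else 0) - w v x * θ x) :=
        Finset.sum_congr rfl fun x _ => entry_mul x
    _ = (∑ x, w v x) * θ v - ∑ x, w v x * θ x := by
        rw [Finset.sum_sub_distrib, Finset.sum_ite_eq, if_pos (Finset.mem_univ v)]
    _ = ∑ x, w v x * (θ v - θ x) := by
        simp only [mul_sub, Finset.sum_sub_distrib, Finset.sum_mul]
    _ = netOutflow w θ v := (finsum_eq_sum_of_fintype _).symm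

/-- Core claim of Proposition 2.  Decompose the connected grid by a vertex cut set
`C`: `B` is a nonempty union of some (but not all) of the connected components of
`G − C`, `A = V ∖ (B ∪ C)` is nonempty, and no edge joins `A` and `B`.  If the
angles `θ` satisfy `(L θ)_v = 0` for every interior bus `v ∈ A` and `θ` is constant
on `C`, then `θ` is constant on `A ∪ C`; in particular the flow on every edge with
both endpoints in `A ∪ C` is zero. -/
theorem zero_flow_in_subgrid {V : Type*} [Fintype V] [DecidableEq V]
    (w : V → V → ℝ)
    (hsym : ∀ u v, w u v = w v u)
    (hdiag : ∀ v, w v v = 0)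
    (hnonneg : ∀ u v, 0 ≤ w u v)
    (hconn : (SimpleGraph.fromRel fun u v => 0 < w u v).Connected)
    (C B : Finset V) (hCB : Disjoint C B) (hB : B.Nonempty)
    (A : Finset V) (hA : A = (C ∪ B)ᶜ) (hAne : A.Nonempty)
    (hsep : ∀ a ∈ A, ∀ b ∈ B, w a b = 0)
    (θ : V → ℝ)
    (hharm : ∀ v ∈ A, (weightedLaplacian w *ᵥ θ) v = 0)
    (hconst : ∀ u ∈ C, ∀ v ∈ C, θ u = θ v) :
    (∀ u ∈ A ∪ C, ∀ v ∈ A ∪ C, θ u = θ v) ∧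
    (∀ u ∈ A ∪ C, ∀ v ∈ A ∪ C, 0 < w u v → w u v * (θ u - θ v) = 0) := by
  obtain ⟨b, hb⟩ := hB
  exact_mod_cast zero_flow_in_subgrid_general (A := A) (B := B) (C := C)
    (by simp [hA, Set.compl_inter]) A.finite_toSet (fun a _ => hnonneg a)
    (fun a _ => Set.toFinite _)
    (fun a _ => ⟨b, by simp [hA, hb],
      reflTransGen_of_connected_fromRel (fun u v h => hsym u v ▸ h) hconn a b⟩)
    hsep (fun a ha => weightedLaplacian_mulVec_apply (hdiag a) θ ▸ hharm a ha) hconst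
end

section
/- Let G be a connected weighted graph on a finite vertex set V with positive edge susceptances and weighted Laplacian L, and fix a reference vertex r, so shift factors Ψ_{ℓ,v} are well defined. Let C ⊆ V be a vertex cut set with |C| = m, let B be a nonempty union of the vertex sets of some (but not all) connected components of G − C, and A = V ∖ (B ∪ C), so that no edge of G joins A and B. Consider the injection shift factor matrix Ψ whose rows are indexed by oriented edges of G and whose columns are indexed by V. Then: (1) the submatrix of Ψ whose rows correspond to edges with both endpoints in A ∪ C and whose columns correspond to buses in C ∪ B has rank at most m; and (2) the submatrix of Ψ whose rows correspond to edges with at least one endpoint in B and whose columns correspond to buses in A ∪ C has rank at most m. -/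
open Matrix

/-!
Let `Θ` be the matrix of nodal angles, and let `I`, `J` be sets of buses such that `L u v = 0`
whenever `u ∉ J` and `v ∉ I`. Grounding at `r` makes `L` and `Θ` mutually inverse, and the nullity
theorem for complementary submatrices bounds the rank of `Θ[I, J]` by `|I ∩ J|`: after grounding,
the rows of `L` outside `J` are independent, are supported on `I`, and annihilate the columns of
`Θ[I, J]`. The flow on a line with both ends in `I` is a combination of two rows of `Θ[I, J]`.
A cut set `C` gives the two cases `I = A ∪ C`, `J = C ∪ B` and `I = B ∪ C`, `J = A ∪ C`, in which
`I ∩ J = C`.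
-/

section Rank

variable {m n p K : Type*} [Field K]

theorem rank_add_card_le_of_mul_eq_one_of_mul_eq_zero [Fintype m] [Fintype n] [Fintype p]
    [DecidableEq m] {P : Matrix m n K} {Q : Matrix n m K} {N : Matrix n p K}
    (hPQ : P * Q = 1) (hPN : P * N = 0) : N.rank + Fintype.card m ≤ Fintype.card n := by
  have hP : Fintype.card m ≤ P.rank :=
    calc Fintype.card m = (P * Q).rank := by rw [hPQ, rank_one]
      _ ≤ P.rank := rank_mul_le_left P Q
  have hPN_rank : P.rank + N.rank ≤ Fintype.card n := rank_add_rank_le_card_of_mul_eq_zero hPN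
  omega

theorem rank_le_rank_of_row_mem_span [Finite m] [Finite n] [Fintype p]
    {M : Matrix m p K} {N : Matrix n p K}
    (h : ∀ i, M.row i ∈ Submodule.span K (Set.range N.row)) : M.rank ≤ N.rank := by
  rw [rank_eq_finrank_span_row, rank_eq_finrank_span_row]
  exact Submodule.finrank_mono (Submodule.span_le.2 (Set.range_subset_iff.2 h))

end Rank

section GroundedInverse

variable {V K : Type*} [Fintype V] [DecidableEq V] [Field K]

/-- `T` is a right inverse of `L` grounded at the reference vertex `r`: column `v` of `T` holds the
nodal angles, zero at `r`, caused by a unit injection at `v` withdrawn at `r`. Both matrices keep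
the index set `V`; only the balance equation at `r` is discarded. -/
structure IsGroundedInverse (L T : Matrix V V K) (r : V) : Prop where
  row_eq_zero : ∀ v, T r v = 0
  mul_apply : ∀ u v, u ≠ r → (L * T) u v = (1 : Matrix V V K) u v

theorem isGroundedInverse_of_mulVec_eq {L : Matrix V V K} {r : V} {Θ : V → V → K}
    (hΘr : ∀ v, Θ v r = 0) (hΘ : ∀ v, L *ᵥ Θ v = Pi.single v 1 - Pi.single r 1) :
    IsGroundedInverse L (Matrix.of Θ)ᵀ r where
  row_eq_zero := hΘr
  mul_apply u v hu := by
    have hcol : (L * (Matrix.of Θ)ᵀ) u v = (L *ᵥ Θ v) u := rfl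
    simp [hcol, hΘ, hu, Matrix.one_apply, Pi.single_apply]

namespace IsGroundedInverse

variable {L T : Matrix V V K} {r : V} {I J : Finset V} {κ : Type*}

theorem submatrix_mul_submatrix {α : Type*} (hT : IsGroundedInverse L T r) (row : α → V)
    (bus : κ → V) (hrow : ∀ i, row i ≠ r) (hL : ∀ i, ∀ v ∉ I, L (row i) v = 0) :
    L.submatrix row (Subtype.val : I.erase r → V) * T.submatrix Subtype.val bus =
      (1 : Matrix V V K).submatrix row bus := by
  ext i k
  calc ∑ v : I.erase r, L (row i) v * T v (bus k)
      = ∑ v ∈ I.erase r, L (row i) v * T v (bus k) :=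
        Finset.sum_coe_sort (I.erase r) fun v => L (row i) v * T v (bus k)
    _ = ∑ v, L (row i) v * T v (bus k) := by
        refine Finset.sum_subset (Finset.subset_univ _) fun v _ hv => ?_
        by_cases hvr : v = r
        · rw [hvr, hT.row_eq_zero, mul_zero]
        · rw [hL i v fun hvI => hv (Finset.mem_erase.2 ⟨hvr, hvI⟩), zero_mul]
    _ = (1 : Matrix V V K) (row i) (bus k) := hT.mul_apply _ _ (hrow i)

variable [Fintype κ]

theorem rank_submatrix_erase_le_card_inter (hT : IsGroundedInverse L T r)
    (hL : ∀ u ∉ J, ∀ v ∉ I, L u v = 0) (bus : κ → V) (hbus : ∀ k, bus k ∈ J) :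
    (T.submatrix (Subtype.val : I.erase r → V) bus).rank ≤ (I ∩ J).card := by
  have hne : ∀ u : Jᶜ.erase r, (u : V) ≠ r := fun u => Finset.ne_of_mem_erase u.2
  have hnotMem : ∀ u : Jᶜ.erase r, (u : V) ∉ J := fun u =>
    Finset.mem_compl.1 (Finset.mem_of_mem_erase u.2)
  have hsupp : ∀ u : Jᶜ.erase r, ∀ v ∉ I, L u v = 0 := fun u => hL u (hnotMem u)
  have hright := (hT.submatrix_mul_submatrix _ _ hne hsupp).trans
    (submatrix_one (Subtype.val : Jᶜ.erase r → V) Subtype.val_injective)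
  have hone : (1 : Matrix V V K).submatrix (Subtype.val : Jᶜ.erase r → V) bus = 0 := by
    ext u k
    exact one_apply_ne fun h => hnotMem u (h ▸ hbus k)
  have hzero := (hT.submatrix_mul_submatrix _ bus hne hsupp).trans hone
  have hrank := rank_add_card_le_of_mul_eq_one_of_mul_eq_zero hright hzero
  have hcard : (I.erase r).card ≤ (I ∩ J).card + (Jᶜ.erase r).card := by
    refine (Finset.card_le_card fun v hv => ?_).trans (Finset.card_union_le _ _)
    simp only [Finset.mem_union, Finset.mem_inter, Finset.mem_erase, Finset.mem_compl] at hv ⊢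
    tauto
  simp only [Fintype.card_coe] at hrank
  omega

theorem rank_submatrix_flow_le_card_inter {ι : Type*} [Finite ι] (hT : IsGroundedInverse L T r)
    (hL : ∀ u ∉ J, ∀ v ∉ I, L u v = 0) {b : V × V → K} {Ψ : Matrix (V × V) V K}
    (hΨ : ∀ ℓ v, Ψ ℓ v = b ℓ * (T ℓ.2 v - T ℓ.1 v)) (line : ι → V × V) (bus : κ → V)
    (hline : ∀ i, (line i).1 ∈ I ∧ (line i).2 ∈ I) (hbus : ∀ k, bus k ∈ J) :
    (Ψ.submatrix line bus).rank ≤ (I ∩ J).card := by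
  refine (rank_le_rank_of_row_mem_span fun i => ?_).trans
    (hT.rank_submatrix_erase_le_card_inter hL bus hbus)
  set R := Submodule.span K (Set.range (T.submatrix (Subtype.val : I.erase r → V) bus).row)
  have hangle : ∀ u ∈ I, (fun k => T u (bus k)) ∈ R := fun u hu => by
    by_cases hur : u = r
    · simpa only [hur, hT.row_eq_zero] using! R.zero_mem
    · exact Submodule.subset_span ⟨⟨u, Finset.mem_erase.2 ⟨hur, hu⟩⟩, rfl⟩
  have hflow : (Ψ.submatrix line bus).row i =
      b (line i) • ((fun k => T (line i).2 (bus k)) - fun k => T (line i).1 (bus k)) :=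
    funext fun k => hΨ (line i) (bus k)
  rw [hflow]
  exact R.smul_mem _ (R.sub_mem (hangle _ (hline i).2) (hangle _ (hline i).1))

end IsGroundedInverse

end GroundedInverse

theorem shift_factor_submatrix_rank_le_general {V K : Type*} [Fintype V] [DecidableEq V] [Field K]
    (G : SimpleGraph V) {L : Matrix V V K} (hL : ∀ u v, u ≠ v → ¬G.Adj u v → L u v = 0)
    {r : V} {Θ : V → V → K} (hΘr : ∀ v, Θ v r = 0)
    (hΘ : ∀ v, L *ᵥ Θ v = Pi.single v 1 - Pi.single r 1)
    {b : V × V → K} {Ψ : Matrix (V × V) V K} (hΨ : ∀ ℓ v, Ψ ℓ v = b ℓ * (Θ v ℓ.2 - Θ v ℓ.1))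
    {C B A : Finset V} (hA : A = (C ∪ B)ᶜ) (hsep : ∀ a ∈ A, ∀ b ∈ B, ¬G.Adj a b) :
    (Ψ.submatrix
        (fun ℓ : {ℓ : V × V // G.Adj ℓ.1 ℓ.2 ∧ ℓ.1 ∈ A ∪ C ∧ ℓ.2 ∈ A ∪ C} => (ℓ : V × V))
        (fun v : {v : V // v ∈ C ∪ B} => (v : V))).rank ≤ C.card ∧
    (Ψ.submatrix
        (fun ℓ : {ℓ : V × V // G.Adj ℓ.1 ℓ.2 ∧ (ℓ.1 ∈ B ∨ ℓ.2 ∈ B)} => (ℓ : V × V))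
        (fun v : {v : V // v ∈ A ∪ C} => (v : V))).rank ≤ C.card := by
  have hmem : ∀ v, v ∈ A ↔ v ∉ C ∧ v ∉ B := fun v => by simp [hA]
  have hT := isGroundedInverse_of_mulVec_eq hΘr hΘ
  have hinterA : (A ∪ C) ∩ (C ∪ B) = C := by grind
  have hinterB : (B ∪ C) ∩ (A ∪ C) = C := by grind
  have hLA : ∀ u ∉ C ∪ B, ∀ v ∉ A ∪ C, L u v = 0 := fun u hu v hv =>
    hL u v (by grind) (hsep u (by grind) v (by grind))
  have hLB : ∀ u ∉ A ∪ C, ∀ v ∉ B ∪ C, L u v = 0 := fun u hu v hv =>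
    hL u v (by grind) fun huv => hsep v (by grind) u (by grind) huv.symm
  have hlineB : ∀ u v, G.Adj u v → u ∈ B → v ∈ B ∪ C := fun u v huv hu => by
    have hvA : v ∉ A := fun hv => hsep v hv u hu huv.symm
    grind
  constructor
  · simpa only [hinterA] using
      hT.rank_submatrix_flow_le_card_inter hLA hΨ _ _ (fun ℓ => ℓ.2.2) fun v => v.2
  · simpa only [hinterB] using
      hT.rank_submatrix_flow_le_card_inter hLB hΨ _ _ (fun ⟨ℓ, hadj, hℓ⟩ => hℓ.elim
        (fun h => ⟨Finset.mem_union_left _ h, hlineB _ _ hadj h⟩)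
        fun h => ⟨hlineB _ _ hadj.symm h, Finset.mem_union_left _ h⟩) fun v => v.2

/-- The graph of a weighted network, whose edges are the pairs of positive susceptance. It is built
directly rather than by `SimpleGraph.fromRel`, so that adjacency unfolds to `0 < w u v`. -/
def susceptanceGraph {V : Type*} (w : V → V → ℝ) (hsym : ∀ u v, w u v = w v u)
    (hdiag : ∀ v, w v v = 0) : SimpleGraph V where
  Adj u v := 0 < w u v
  symm := ⟨fun u v huv => hsym u v ▸ huv⟩
  loopless := ⟨fun v hv => hv.ne' (hdiag v)⟩

theorem weightedLaplacian_eq_zero_of_not_adj {V : Type*} [Fintype V] [DecidableEq V]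
    {w : V → V → ℝ} (hsym : ∀ u v, w u v = w v u) (hdiag : ∀ v, w v v = 0)
    (hnonneg : ∀ u v, 0 ≤ w u v) (u v : V) (huv : u ≠ v)
    (hadj : ¬(susceptanceGraph w hsym hdiag).Adj u v) : weightedLaplacian w u v = 0 := by
  have hw : w u v = 0 := le_antisymm (not_lt.1 hadj) (hnonneg u v)
  simp [weightedLaplacian, huv, hw]

/-- Corollary 1.  Decompose the connected grid by a vertex cut set `C` of
cardinality `m`: `B` is a nonempty union of some (but not all) of the connected
components of `G − C`, `A = V ∖ (B ∪ C)` is nonempty, and no edge joins `A` and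
`B`.  Consider the injection shift factor matrix `Ψ` (rows indexed by oriented
edges, columns by buses, with reference bus `r`).  Then (1) the submatrix with rows
the edges having both endpoints in `A ∪ C` and columns the buses in `C ∪ B` has
rank at most `m`, and (2) the submatrix with rows the edges having an endpoint in
`B` and columns the buses in `A ∪ C` has rank at most `m`. -/
theorem shift_factor_submatrix_rank_le {V : Type*} [Fintype V] [DecidableEq V]
    (w : V → V → ℝ)
    (hsym : ∀ u v, w u v = w v u)
    (hdiag : ∀ v, w v v = 0)
    (hnonneg : ∀ u v, 0 ≤ w u v)
    (hconn : (SimpleGraph.fromRel fun u v => 0 < w u v).Connected)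
    -- the reference bus and the nodal angles defining the shift factors
    (r : V) (Θ : V → V → ℝ)
    (hΘr : ∀ v, Θ v r = 0)
    (hΘ : ∀ v, weightedLaplacian w *ᵥ Θ v = Pi.single v 1 - Pi.single r 1)
    -- the full injection shift factor matrix, rows indexed by oriented pairs
    (Ψ : Matrix (V × V) V ℝ)
    (hΨ : ∀ ℓ v, Ψ ℓ v = w ℓ.1 ℓ.2 * (Θ v ℓ.2 - Θ v ℓ.1))
    -- the vertex cut set `C` and the decomposition `V = A ∪ C ∪ B`
    (C B : Finset V) (hCB : Disjoint C B) (hB : B.Nonempty)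
    (A : Finset V) (hA : A = (C ∪ B)ᶜ) (hAne : A.Nonempty)
    (hsep : ∀ a ∈ A, ∀ b ∈ B, w a b = 0) :
    (Ψ.submatrix
        (fun ℓ : {ℓ : V × V // 0 < w ℓ.1 ℓ.2 ∧ ℓ.1 ∈ A ∪ C ∧ ℓ.2 ∈ A ∪ C} => (ℓ : V × V))
        (fun v : {v : V // v ∈ C ∪ B} => (v : V))).rank ≤ C.card ∧
    (Ψ.submatrix
        (fun ℓ : {ℓ : V × V // 0 < w ℓ.1 ℓ.2 ∧ (ℓ.1 ∈ B ∨ ℓ.2 ∈ B)} => (ℓ : V × V))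
        (fun v : {v : V // v ∈ A ∪ C} => (v : V))).rank ≤ C.card :=
  shift_factor_submatrix_rank_le_general (susceptanceGraph w hsym hdiag)
    (weightedLaplacian_eq_zero_of_not_adj hsym hdiag hnonneg) hΘr hΘ (b := fun ℓ => w ℓ.1 ℓ.2) hΨ hA
    fun a ha b hb => (hsep a ha b hb).not_gt
end
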